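/- arXiv:0910.5870 — 10 statements merged into one kernel-verified Lean document; each statement's English description precedes it below -/
import Mathlib

section
/- Let D be the set of functions f : ℤ → Fin 10 such that f i = 0 for all sufficiently large i, ordered by: f < g iff there exists m : ℤ with f m < g m and f i = g i for all i > m (the lexicographic order on digit strings, most significant digit first). Then every nonempty subset of D that is bounded above in this order has a least upper bound in D. -/
/-!
The supremum is built greedily, one digit at a time. If `b` is an upper bound whose digits vanish
above position `M`, then so do the digits of every element of `S`. Starting from any element of `S`,
replace the current element `g n` by an element `g (n + 1)` of `S` that agrees with it at all
positions above `M - n` and has the largest possible digit at `M - n` (`exists_max_digit`). The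
digits stabilise, and the limit string `u` agrees with `g n` above position `M - n`.

No `f ∈ S` exceeds `u`: at the first difference `m`, `f` would beat the maximal digit. No upper
bound `v` is below `u`: at the first difference, `u` agrees with some `g n ∈ S` up to and including
that digit, so `v < g n`. Totality of the order on `DecSet` (`decLt_trichotomy`) finishes.
-/

/-- The set of digit strings indexed by `ℤ` (digit at the `10^i` place) with only
finitely many nonzero digits before the decimal point. -/
def DecSet : Set (ℤ → Fin 10) := {f | ∃ M : ℤ, ∀ i > M, f i = 0}

/-- The lexicographic order on digit strings, most significant digit first. -/
def DecLt (f g : ℤ → Fin 10) : Prop :=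
  ∃ m : ℤ, f m < g m ∧ ∀ i > m, f i = g i

/-- The associated non-strict order. -/
def DecLe (f g : ℤ → Fin 10) : Prop := f = g ∨ DecLt f g

/-- Two distinct elements of `DecSet` have a most significant differing digit, so the order is
total. -/
lemma decLt_trichotomy {f g : ℤ → Fin 10} (hf : f ∈ DecSet) (hg : g ∈ DecSet) :
    f = g ∨ DecLt f g ∨ DecLt g f := by
  obtain ⟨A, hA⟩ := hf
  obtain ⟨B, hB⟩ := hg
  by_cases h : f = g
  · exact Or.inl h
  · right
    obtain ⟨i, hi⟩ := Function.ne_iff.mp h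
    obtain ⟨m, hm, hmax⟩ := Int.exists_greatest_of_bdd (P := fun j => f j ≠ g j)
      ⟨max A B, fun z hz => by
        by_contra hlt
        exact hz ((hA z (by omega)).trans (hB z (by omega)).symm)⟩ ⟨i, hi⟩
    have heq : ∀ j > m, f j = g j := fun j hj => by
      by_contra hne
      exact absurd (hmax j hne) (by omega)
    rcases lt_or_gt_of_ne hm with hlt | hlt
    · exact Or.inl ⟨m, hlt, heq⟩
    · exact Or.inr ⟨m, hlt, fun j hj => (heq j hj).symm⟩

lemma not_decLe_of_decLt {f g : ℤ → Fin 10} (h : DecLt f g) : ¬ DecLe g f := by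
  obtain ⟨m, hm, hm'⟩ := h
  rintro (rfl | ⟨k, hk, hk'⟩)
  · exact lt_irrefl _ hm
  · rcases lt_trichotomy m k with hlt | rfl | hlt
    · exact hk.ne (hm' k hlt).symm
    · exact lt_asymm hm hk
    · exact hm.ne (hk' m hlt).symm

/-- Elements below a string whose digits vanish above `M` have vanishing digits above `M`. -/
lemma eq_zero_of_decLe {f b : ℤ → Fin 10} {M : ℤ} (hb : ∀ i > M, b i = 0) (h : DecLe f b) :
    ∀ i > M, f i = 0 := by
  rcases h with rfl | ⟨m, hm, hm'⟩
  · exact hb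
  · have hmM : m ≤ M := by
      by_contra hlt
      rw [hb m (by omega)] at hm
      exact absurd hm (Fin.not_lt_zero _)
    exact fun i hi => (hm' i (by omega)).trans (hb i hi)

/-- The greedy step: among the elements of `S` agreeing with `f` above position `i`, some element
has the largest `i`-th digit. -/
lemma exists_max_digit {S : Set (ℤ → Fin 10)} (f : S) (i : ℤ) :
    ∃ g : S, (∀ j > i, g.1 j = f.1 j) ∧
      ∀ h ∈ S, (∀ j > i, h j = f.1 j) → h i ≤ g.1 i := by
  obtain ⟨d, ⟨g, hgS, hg, rfl⟩, hmax⟩ := Set.exists_max_image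
    {d : Fin 10 | ∃ g ∈ S, (∀ j > i, g j = f.1 j) ∧ g i = d} id (Set.toFinite _)
    ⟨f.1 i, f.1, f.2, fun _ _ => rfl, rfl⟩
  exact ⟨⟨g, hgS⟩, hg, fun h hS hh => hmax _ ⟨h, hS, hh, rfl⟩⟩

/-- Every nonempty subset of `DecSet` bounded above in the lexicographic order has a
least upper bound in `DecSet`. -/
theorem decSet_exists_lub (S : Set (ℤ → Fin 10)) (hS : S ⊆ DecSet) (hne : S.Nonempty)
    (hbd : ∃ b ∈ DecSet, ∀ f ∈ S, DecLe f b) :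
    ∃ u ∈ DecSet, (∀ f ∈ S, DecLe f u) ∧
      ∀ v ∈ DecSet, (∀ f ∈ S, DecLe f v) → DecLe u v := by
  obtain ⟨b, ⟨M, hM⟩, hb⟩ := hbd
  obtain ⟨f₀, hf₀⟩ := hne
  have hzero : ∀ f ∈ S, ∀ i > M, f i = 0 := fun f hf => eq_zero_of_decLe hM (hb f hf)
  choose next hnext hmax using exists_max_digit (S := S)
  let g : ℕ → S := fun n => Nat.rec ⟨f₀, hf₀⟩ (fun k x => next x (M - k)) n
  have hg : ∀ n, g (n + 1) = next (g n) (M - n) := fun _ => rfl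
  have hstable : ∀ n k : ℕ, n ≤ k → ∀ j > M - n, (g k).1 j = (g n).1 j := by
    intro n k hnk
    induction k, hnk using Nat.le_induction with
    | base => exact fun _ _ => rfl
    | succ k hk ih =>
      intro j hj
      rw [hg, hnext _ _ j (by omega), ih j hj]
  -- The digit at `j ≤ M` is fixed by step `M - j`; for `j > M` every `g n` has digit `0`.
  let u : ℤ → Fin 10 := fun j => (g ((M - j).toNat + 1)).1 j
  have hug : ∀ n : ℕ, ∀ j > M - n, u j = (g n).1 j := by
    intro n j hj
    by_cases hjM : j ≤ M
    · exact (hstable ((M - j).toNat + 1) n (by omega) j (by omega)).symm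
    · exact (hzero _ (g ((M - j).toNat + 1)).2 j (by omega)).trans (hzero _ (g n).2 j (by omega)).symm
  have huM : ∀ i > M, u i = 0 := fun i hi => hzero _ (g ((M - i).toNat + 1)).2 i hi
  refine ⟨u, ⟨M, huM⟩, fun f hf => ?_, fun v hv hvS => ?_⟩
  · rcases decLt_trichotomy (hS hf) ⟨M, huM⟩ with h | h | ⟨m, hm, heq⟩
    · exact Or.inl h
    · exact Or.inr h
    · exfalso
      have hmM : m ≤ M := by
        by_contra hlt
        rw [hzero f hf m (by omega)] at hm
        exact absurd hm (Fin.not_lt_zero _)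
      obtain ⟨n, hn⟩ := Int.eq_ofNat_of_zero_le (sub_nonneg.mpr hmM)
      obtain rfl : m = M - n := by omega
      have hle := hmax (g n) (M - n) f hf fun j hj => (heq j hj).symm.trans (hug n j hj)
      rw [← hg, ← hug (n + 1) (M - n) (by push_cast; omega)] at hle
      exact absurd hm hle.not_gt
  · rcases decLt_trichotomy ⟨M, huM⟩ hv with h | h | ⟨m, hm, heq⟩
    · exact Or.inl h
    · exact Or.inr h
    · exfalso
      have hagree : ∀ j ≥ m, u j = (g ((M - m).toNat + 1)).1 j := fun j hj =>
        hug ((M - m).toNat + 1) j (by push_cast; omega)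
      exact not_decLe_of_decLt ⟨m, hm.trans_eq (hagree m le_rfl),
        fun j hj => (heq j hj).trans (hagree j hj.le)⟩ (hvS _ (Subtype.prop _))
end

section
/- Let (m, a) and (m', a') be two nonnegative decimals with truncation sequences t and t'. Then t n − t' n tends to 0 (as n → ∞) if and only if (m, a) = (m', a') or the two decimals form a jump, meaning that, after possibly swapping the two decimals, one of the following holds: (i) m' = m + 1 and a i = 9 and a' i = 0 for all i : ℕ; or (ii) m = m' and there exists j : ℕ such that a i = a' i for all i < j, (a' j : ℕ) = (a j : ℕ) + 1, and a i = 9 and a' i = 0 for all i > j. -/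
/-!
Scale the difference of the truncations to the integer `D n = 10 ^ n * (t n - t' n)`, which satisfies
`D 0 = m - m'` and `D (n + 1) = 10 * D n + (a n - a' n)`.  Since digits differ by at most `9`,
`|D (n + 1)| - 1 ≥ 10 * (|D n| - 1)`, so once `|D k| ≥ 2` the difference `D n / 10 ^ n` stays at
least `1 / 10 ^ k` in absolute value.  Hence `t n - t' n → 0` iff `|D n| ≤ 1` for all `n`
(`tendsto_iff_abs_scaledDiff_le_one`).  Under that bound, `D n = -1` forces `a n = 9`, `a' n = 0` and
`D (n + 1) = -1`; so either `D` vanishes identically and the decimals agree, or the first index with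
`D ≠ 0` exhibits the jump (`isJump_of_scaledDiff`).
-/

/-- The `n`-truncation of the nonnegative decimal `(m, a)`. -/
def trunc (m : ℕ) (a : ℕ → Fin 10) (n : ℕ) : ℚ :=
  m + ∑ i ∈ Finset.range n, (a i : ℚ) / 10 ^ (i + 1)

/-- `(m, a) < (m', a')` form a jump: they are consecutive in the lexicographic order,
differing as `…x999… < …(x+1)000…`. -/
def IsJump (m : ℕ) (a : ℕ → Fin 10) (m' : ℕ) (a' : ℕ → Fin 10) : Prop :=
  (m' = m + 1 ∧ ∀ i : ℕ, a i = 9 ∧ a' i = 0) ∨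
  (m = m' ∧ ∃ j : ℕ, (∀ i < j, a i = a' i) ∧ (a' j : ℕ) = (a j : ℕ) + 1 ∧
    ∀ i > j, a i = 9 ∧ a' i = 0)

/-- The integer `10 ^ n * (trunc m a n - trunc m' a' n)`, defined by its recursion. -/
def scaledDiff (m m' : ℕ) (a a' : ℕ → Fin 10) : ℕ → ℤ
  | 0 => (m : ℤ) - m'
  | n + 1 => 10 * scaledDiff m m' a a' n + (((a n : ℕ) : ℤ) - ((a' n : ℕ) : ℤ))

theorem trunc_sub_eq_scaledDiff (m m' : ℕ) (a a' : ℕ → Fin 10) (n : ℕ) :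
    trunc m a n - trunc m' a' n = (scaledDiff m m' a a' n : ℚ) / 10 ^ n := by
  induction n with
  | zero => simp [trunc, scaledDiff]
  | succ n ih =>
    have h : trunc m a (n + 1) - trunc m' a' (n + 1) = (trunc m a n - trunc m' a' n)
        + ((a n : ℚ) / 10 ^ (n + 1) - (a' n : ℚ) / 10 ^ (n + 1)) := by
      simp only [trunc, Finset.sum_range_succ]
      ring
    rw [h, ih]
    simp only [scaledDiff]
    push_cast
    field_simp
    ring

theorem scaledDiff_swap (m m' : ℕ) (a a' : ℕ → Fin 10) (n : ℕ) :
    scaledDiff m' m a' a n = -scaledDiff m m' a a' n := by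
  induction n with
  | zero => simp [scaledDiff]
  | succ n ih => simp only [scaledDiff, ih]; ring

/-- Once the scaled difference reaches `2` in absolute value, it grows like `10 ^ n`. -/
theorem pow_lt_abs_scaledDiff {m m' : ℕ} {a a' : ℕ → Fin 10} {k : ℕ}
    (hk : 1 < |scaledDiff m m' a a' k|) (n : ℕ) :
    (10 : ℤ) ^ n < |scaledDiff m m' a a' (k + n)| := by
  induction n with
  | zero => simpa using hk
  | succ n ih =>
    have h1 := (a (k + n)).isLt
    have h2 := (a' (k + n)).isLt
    rw [← add_assoc, scaledDiff, pow_succ]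
    rw [lt_abs] at ih ⊢
    omega

theorem tendsto_iff_abs_scaledDiff_le_one (m m' : ℕ) (a a' : ℕ → Fin 10) :
    Filter.Tendsto (fun n => trunc m a n - trunc m' a' n) Filter.atTop (nhds (0 : ℚ)) ↔
      ∀ n, |scaledDiff m m' a a' n| ≤ 1 := by
  simp only [trunc_sub_eq_scaledDiff]
  constructor
  · intro h k
    by_contra! hk
    have hev := h.eventually (Metric.ball_mem_nhds (0 : ℚ)
      (show (0 : ℝ) < ((1 / 10 ^ k : ℚ) : ℝ) by positivity))
    obtain ⟨N, hN⟩ := Filter.eventually_atTop.1 hev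
    have h1 := hN (k + N) (by omega)
    rw [Rat.dist_eq] at h1
    have h1' : |(scaledDiff m m' a a' (k + N) : ℚ) / 10 ^ (k + N)| < 1 / 10 ^ k := by
      have h2 : ((|(scaledDiff m m' a a' (k + N) : ℚ) / 10 ^ (k + N)| : ℚ) : ℝ)
          < ((1 / 10 ^ k : ℚ) : ℝ) := by
        simpa using h1
      exact_mod_cast h2
    have h3 : (10 : ℚ) ^ N < |(scaledDiff m m' a a' (k + N) : ℚ)| := by
      exact_mod_cast pow_lt_abs_scaledDiff hk N
    rw [abs_div, abs_of_pos (show (0 : ℚ) < 10 ^ (k + N) by positivity),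
      div_lt_div_iff₀ (by positivity) (by positivity), pow_add] at h1'
    have h4 : (0 : ℚ) < 10 ^ k := by positivity
    nlinarith
  · intro h
    have hlim : Filter.Tendsto (fun n : ℕ => ((1 / 10 : ℚ)) ^ n) Filter.atTop (nhds 0) :=
      tendsto_pow_atTop_nhds_zero_of_lt_one (by norm_num) (by norm_num)
    refine squeeze_zero_norm' (a := fun n : ℕ => (((1 / 10 : ℚ) ^ n : ℚ) : ℝ))
      (Filter.Eventually.of_forall fun n => ?_) ?_
    · have h1 : |(scaledDiff m m' a a' n : ℚ) / 10 ^ n| ≤ (1 / 10) ^ n := by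
        rw [abs_div, abs_of_pos (show (0 : ℚ) < 10 ^ n by positivity), one_div, inv_pow,
          div_eq_mul_inv]
        have h2 : |(scaledDiff m m' a a' n : ℚ)| ≤ 1 := by exact_mod_cast h n
        exact mul_le_of_le_one_left (by positivity) h2
      rw [← Rat.norm_cast_real, Real.norm_eq_abs]
      exact_mod_cast h1
    · simpa [Function.comp_def] using (Rat.continuous_coe_real.tendsto 0).comp hlim

/-- A scaled difference equal to `-1` must stay there, which forces digits `9` against `0`. -/
theorem tail_of_scaledDiff {m m' : ℕ} {a a' : ℕ → Fin 10}
    (h : ∀ n, |scaledDiff m m' a a' n| ≤ 1) {j : ℕ} (hj : scaledDiff m m' a a' j = -1)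
    {i : ℕ} (hi : j ≤ i) : a i = 9 ∧ a' i = 0 := by
  have step : ∀ n, scaledDiff m m' a a' n = -1 →
      scaledDiff m m' a a' (n + 1) = -1 ∧ a n = 9 ∧ a' n = 0 := by
    intro n hn
    have h1 := (a n).isLt
    have h2 := (a' n).isLt
    have h3 := abs_le.1 (h (n + 1))
    rw [scaledDiff, hn] at h3 ⊢
    simp only [Fin.ext_iff]
    refine ⟨by omega, ?_, ?_⟩
    · change (a n : ℕ) = 9
      omega
    · change (a' n : ℕ) = 0
      omega
  have stay : scaledDiff m m' a a' i = -1 := by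
    induction i, hi using Nat.le_induction with
    | base => exact hj
    | succ n _ ih => exact (step n ih).1
  exact (step i stay).2

theorem digits_eq_of_scaledDiff {m m' : ℕ} {a a' : ℕ → Fin 10} {i : ℕ}
    (h0 : scaledDiff m m' a a' i = 0) (h1 : scaledDiff m m' a a' (i + 1) = 0) :
    a i = a' i := by
  rw [scaledDiff, h0] at h1
  apply Fin.ext
  omega

/-- If the first nonzero scaled difference is `-1`, its index locates the jump. -/
theorem isJump_of_scaledDiff {m m' : ℕ} {a a' : ℕ → Fin 10}
    (h : ∀ n, |scaledDiff m m' a a' n| ≤ 1) {j : ℕ} (hj : scaledDiff m m' a a' j = -1)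
    (hlt : ∀ i < j, scaledDiff m m' a a' i = 0) : IsJump m a m' a' := by
  cases j with
  | zero =>
    refine Or.inl ⟨?_, fun i => tail_of_scaledDiff h hj i.zero_le⟩
    rw [scaledDiff] at hj
    omega
  | succ k =>
    refine Or.inr ⟨?_, k, fun i hi => ?_, ?_, fun i hi => tail_of_scaledDiff h hj hi⟩
    · have h0 := hlt 0 k.succ_pos
      rw [scaledDiff] at h0
      omega
    · exact digits_eq_of_scaledDiff (hlt i (by omega)) (hlt (i + 1) (by omega))
    · rw [scaledDiff, hlt k k.lt_succ_self] at hj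
      omega

theorem scaledDiff_eq_zero_of_agree {m : ℕ} {a a' : ℕ → Fin 10} {j : ℕ}
    (h : ∀ i < j, a i = a' i) : scaledDiff m m a a' j = 0 := by
  induction j with
  | zero => simp [scaledDiff]
  | succ n ih => simp [scaledDiff, ih fun i hi => h i (by omega), h n n.lt_succ_self]

theorem scaledDiff_eq_neg_one_of_tail {m m' : ℕ} {a a' : ℕ → Fin 10} {j : ℕ}
    (hj : scaledDiff m m' a a' j = -1) (h : ∀ i ≥ j, a i = 9 ∧ a' i = 0) {i : ℕ} (hi : j ≤ i) :
    scaledDiff m m' a a' i = -1 := by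
  induction i, hi using Nat.le_induction with
  | base => exact hj
  | succ n hn ih =>
    rw [scaledDiff, ih, (h n hn).1, (h n hn).2]
    rfl

theorem abs_scaledDiff_le_one_of_isJump {m m' : ℕ} {a a' : ℕ → Fin 10}
    (h : IsJump m a m' a') (n : ℕ) : |scaledDiff m m' a a' n| ≤ 1 := by
  rcases h with ⟨rfl, h⟩ | ⟨rfl, j, hlt, hj, hgt⟩
  · rw [scaledDiff_eq_neg_one_of_tail (j := 0) (by simp [scaledDiff]) (fun i _ => h i) n.zero_le]
    norm_num
  · rcases Nat.lt_or_ge j n with hn | hn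
    · have hj1 : scaledDiff m m a a' (j + 1) = -1 := by
        rw [scaledDiff, scaledDiff_eq_zero_of_agree hlt, hj]
        push_cast
        ring
      rw [scaledDiff_eq_neg_one_of_tail hj1 (fun i hi => hgt i hi) hn]
      norm_num
    · rw [scaledDiff_eq_zero_of_agree fun i hi => hlt i (by omega)]
      norm_num

/-- The difference of the truncation sequences of two nonnegative decimals tends
to `0` iff the decimals are equal or form a jump. -/
theorem trunc_sub_tendsto_zero_iff (m m' : ℕ) (a a' : ℕ → Fin 10) :
    Filter.Tendsto (fun n => trunc m a n - trunc m' a' n) Filter.atTop (nhds (0 : ℚ)) ↔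
      (m = m' ∧ a = a') ∨ IsJump m a m' a' ∨ IsJump m' a' m a := by
  rw [tendsto_iff_abs_scaledDiff_le_one]
  constructor
  · intro h
    by_cases hz : ∀ n, scaledDiff m m' a a' n = 0
    · left
      have h0 := hz 0
      rw [scaledDiff] at h0
      exact ⟨by omega, funext fun i => digits_eq_of_scaledDiff (hz i) (hz (i + 1))⟩
    · right
      push Not at hz
      classical
      have hj := Nat.find_spec hz
      have hlt : ∀ i < Nat.find hz, scaledDiff m m' a a' i = 0 := fun i hi =>
        not_not.1 (Nat.find_min hz hi)
      have hb := abs_le.1 (h (Nat.find hz))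
      rcases lt_or_gt_of_ne hj with hneg | hpos
      · exact Or.inl (isJump_of_scaledDiff h (by omega) hlt)
      · refine Or.inr (isJump_of_scaledDiff (j := Nat.find hz) (fun n => ?_) ?_ fun i hi => ?_)
        · rw [scaledDiff_swap, abs_neg]
          exact h n
        · rw [scaledDiff_swap]
          omega
        · rw [scaledDiff_swap, hlt i hi, neg_zero]
  · rintro (⟨rfl, rfl⟩ | h | h) n
    · rw [scaledDiff_eq_zero_of_agree fun _ _ => rfl]
      norm_num
    · exact abs_scaledDiff_le_one_of_isJump h n
    · rw [scaledDiff_swap, abs_neg]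
      exact abs_scaledDiff_le_one_of_isJump h n
end

section
/- If d : ℕ → ℚ is a nondecreasing sequence of terminating decimals that is bounded above, then d formally converges: for every k : ℕ the integer sequence n ↦ ⌊10^k·|d n|⌋ is eventually constant, and moreover either d n → 0 or the sign of d n is eventually constant. -/
/-!
A monotone bounded sequence of integers is eventually constant. If some `d N` is nonnegative, then
from `N` on `|d n| = d n`, so `⌊10^k * |d n|⌋` is nondecreasing and bounded above. Otherwise every
`d n` is negative, so `⌊10^k * |d n|⌋` is nonincreasing and bounded below by `0`. The sign of `d n`
is always eventually constant, being a nondecreasing sequence in a three-element order; hence the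
alternative `d n → 0` is not needed.
-/

/-- A rational `q` is a terminating decimal if `10^m * q` is an integer for some `m`. -/
def TerminatingDec (q : ℚ) : Prop := ∃ m : ℕ, ∃ z : ℤ, (10 : ℚ) ^ m * q = (z : ℚ)

/-- A sequence of rationals formally converges: for every `k` the integer sequence
`n ↦ ⌊10^k * |d n|⌋` is eventually constant, and moreover either `d n → 0` or the sign
of `d n` is eventually constant. -/
def FormallyConverges (d : ℕ → ℚ) : Prop :=
  (∀ k : ℕ, ∃ c : ℤ, ∃ N : ℕ, ∀ n ≥ N, ⌊(10 : ℚ) ^ k * |d n|⌋ = c) ∧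
  (Filter.Tendsto d Filter.atTop (nhds (0 : ℚ)) ∨
    ∃ s : SignType, ∃ N : ℕ, ∀ n ≥ N, SignType.sign (d n) = s)

theorem eventually_const_of_antitone_bddBelow (f : ℕ → ℤ) (N : ℕ) (b : ℤ)
    (hf : ∀ m ≥ N, ∀ n ≥ m, f n ≤ f m) (hb : ∀ n ≥ N, b ≤ f n) :
    ∃ c : ℤ, ∃ M : ℕ, ∀ n ≥ M, f n = c := by
  -- The eventual value is the least value attained from index `N` on.
  obtain ⟨c, ⟨M, hM, rfl⟩, hmin⟩ := Int.exists_least_of_bdd (P := fun z => ∃ n ≥ N, f n = z)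
    ⟨b, by rintro z ⟨n, hn, rfl⟩; exact hb n hn⟩ ⟨f N, N, le_rfl, rfl⟩
  exact ⟨f M, M, fun n hn => le_antisymm (hf M hM n hn) (hmin _ ⟨n, le_trans hM hn, rfl⟩)⟩

theorem eventually_const_of_monotone_bddAbove (f : ℕ → ℤ) (N : ℕ) (b : ℤ)
    (hf : ∀ m ≥ N, ∀ n ≥ m, f m ≤ f n) (hb : ∀ n ≥ N, f n ≤ b) :
    ∃ c : ℤ, ∃ M : ℕ, ∀ n ≥ M, f n = c := by
  obtain ⟨c, M, h⟩ := eventually_const_of_antitone_bddBelow (fun n => -f n) N (-b)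
    (fun m hm n hn => neg_le_neg (hf m hm n hn)) (fun n hn => neg_le_neg (hb n hn))
  exact ⟨-c, M, fun n hn => by rw [← h n hn, neg_neg]⟩

/-- A nondecreasing, bounded above sequence of terminating decimals formally converges. -/
theorem formallyConverges_of_monotone_bounded (d : ℕ → ℚ)
    (hterm : ∀ n, TerminatingDec (d n)) (hmono : Monotone d)
    (hbd : ∃ B : ℚ, ∀ n, d n ≤ B) :
    FormallyConverges d := by
  obtain ⟨B, hB⟩ := hbd
  refine ⟨fun k => ?_, Or.inr ?_⟩
  · by_cases h : ∃ N, 0 ≤ d N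
    · obtain ⟨N, hN⟩ := h
      have habs : ∀ n ≥ N, |d n| = d n := fun n hn => abs_of_nonneg (hN.trans (hmono hn))
      refine eventually_const_of_monotone_bddAbove _ N ⌊(10 : ℚ) ^ k * B⌋ ?_ ?_
      · intro m hm n hn
        rw [habs m hm, habs n (le_trans hm hn)]
        exact Int.floor_mono (mul_le_mul_of_nonneg_left (hmono hn) (by positivity))
      · intro n hn
        rw [habs n hn]
        exact Int.floor_mono (mul_le_mul_of_nonneg_left (hB n) (by positivity))
    · push Not at h
      refine eventually_const_of_antitone_bddBelow _ 0 0 ?_ ?_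
      · intro m _ n hn
        rw [abs_of_neg (h m), abs_of_neg (h n)]
        exact Int.floor_mono (mul_le_mul_of_nonneg_left (neg_le_neg (hmono hn)) (by positivity))
      · intro n _
        exact Int.floor_nonneg.mpr (by positivity)
  · by_cases hpos : ∃ N, 0 < d N
    · obtain ⟨N, hN⟩ := hpos
      exact ⟨1, N, fun n hn => sign_pos (hN.trans_le (hmono hn))⟩
    · push Not at hpos
      by_cases hzero : ∃ N, 0 ≤ d N
      · obtain ⟨N, hN⟩ := hzero
        exact ⟨0, N, fun n hn =>
          sign_eq_zero_iff.mpr (le_antisymm (hpos n) (hN.trans (hmono hn)))⟩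
      · push Not at hzero
        exact ⟨-1, 0, fun n _ => sign_neg (hzero n)⟩
end

section
/- If d : ℕ → ℚ is a sequence of terminating decimals that is Cauchy, i.e., for every k : ℕ there exists N such that |d m − d n| < 10^(−k) for all m, n > N, then d has a hybrid limit: there exists a real number x such that d n − ⌊10^n·x⌋/10^n tends to 0 as n → ∞. -/
/-- A Cauchy sequence of terminating decimals has a hybrid limit: a real number `x`
such that `d n - ⌊10^n * x⌋ / 10^n → 0`. -/
theorem exists_hybrid_limit_of_cauchy (d : ℕ → ℚ)
    (hterm : ∀ n, TerminatingDec (d n))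
    (hcauchy : ∀ k : ℕ, ∃ N : ℕ, ∀ m > N, ∀ n > N, |d m - d n| < ((10 : ℚ) ^ k)⁻¹) :
    ∃ x : ℝ, Filter.Tendsto
      (fun n : ℕ => (d n : ℝ) - (⌊(10 : ℝ) ^ n * x⌋ : ℝ) / 10 ^ n)
      Filter.atTop (nhds (0 : ℝ)) := by
  have hc : CauchySeq (fun n => (d n : ℝ)) := by
    rw [Metric.cauchySeq_iff]
    intro ε hε
    obtain ⟨k, hk⟩ := exists_pow_lt_of_lt_one hε (show (10 : ℝ)⁻¹ < 1 by norm_num)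
    obtain ⟨N, hN⟩ := hcauchy k
    refine ⟨N + 1, fun m hm n hn => ?_⟩
    have h : ((|d m - d n| : ℚ) : ℝ) < ((((10 : ℚ) ^ k)⁻¹ : ℚ) : ℝ) :=
      Rat.cast_lt.mpr (hN m (by omega) n (by omega))
    push_cast at h
    rw [Real.dist_eq]
    rw [inv_pow] at hk
    exact h.trans hk
  obtain ⟨x, hx⟩ := cauchySeq_tendsto_of_complete hc
  refine ⟨x, ?_⟩
  have hpow : Filter.Tendsto (fun n : ℕ => ((10 : ℝ)⁻¹) ^ n) Filter.atTop (nhds 0) :=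
    tendsto_pow_atTop_nhds_zero_of_lt_one (by norm_num) (by norm_num)
  -- The `n`-truncation of `x` lies within `10⁻ⁿ` below `x`.
  have htrunc : Filter.Tendsto (fun n : ℕ => (⌊(10 : ℝ) ^ n * x⌋ : ℝ) / 10 ^ n)
      Filter.atTop (nhds x) := by
    refine tendsto_of_tendsto_of_tendsto_of_le_of_le
      (g := fun n : ℕ => x - ((10 : ℝ)⁻¹) ^ n) (h := fun _ => x) ?_ tendsto_const_nhds ?_ ?_
    · simpa using tendsto_const_nhds.sub hpow
    · intro n
      have hp : (0 : ℝ) < 10 ^ n := by positivity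
      have h := Int.sub_one_lt_floor ((10 : ℝ) ^ n * x)
      show x - ((10 : ℝ)⁻¹) ^ n ≤ (⌊(10 : ℝ) ^ n * x⌋ : ℝ) / 10 ^ n
      rw [le_div_iff₀ hp, sub_mul, ← mul_pow]
      norm_num
      linarith
    · intro n
      have hp : (0 : ℝ) < 10 ^ n := by positivity
      show (⌊(10 : ℝ) ^ n * x⌋ : ℝ) / 10 ^ n ≤ x
      rw [div_le_iff₀ hp, mul_comm x]
      exact Int.floor_le _
  simpa using hx.sub htrunc
end

section
/- Let m be a positive integer not divisible by 10 whose last digit m mod 10 lies in {2, 3, 7, 8}, and let t : ℤ, so that c = m·10^t is a positive terminating decimal whose last nonzero digit is 2, 3, 7 or 8. Then no real number x whose decimal expansion of |x| is ultimately periodic satisfies x² = m·10^t. -/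
/-!
An ultimately periodic expansion forces rationality. With `F n = ⌊10 ^ n * y⌋`, periodicity says
that `F (n + p) - F n` is multiplied by `10` at each step from `N` on, so
`10 ^ k * (10 ^ N * (10 ^ p - 1) * y - D)` stays bounded for `D = F (N + p) - F N`, whence
`10 ^ N * (10 ^ p - 1) * y = D`.

If `x ^ 2 = m * 10 ^ t` with `|x|` rational, then `m` (for even `t`) or `10 * m` (for odd `t`) is
the square of a rational, hence of a natural number. The first is impossible because squares
end in `0, 1, 4, 5, 6, 9`; in the second the root is divisible by `10`, so `10 ∣ m`.
-/

/-- The `n`-th decimal digit of a real number `y` after the decimal point. -/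
noncomputable def decDigit (y : ℝ) (n : ℕ) : ℤ := ⌊(10 : ℝ) ^ (n + 1) * y⌋ - 10 * ⌊(10 : ℝ) ^ n * y⌋

/-- The decimal expansion of `y` is ultimately periodic. -/
def UltimatelyPeriodic (y : ℝ) : Prop :=
  ∃ p : ℕ, 1 ≤ p ∧ ∃ N : ℕ, ∀ n ≥ N, decDigit y (n + p) = decDigit y n

theorem UltimatelyPeriodic.exists_rat {y : ℝ} (h : UltimatelyPeriodic y) :
    ∃ q : ℚ, (q : ℝ) = y := by
  obtain ⟨p, hp, N, hN⟩ := h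
  have hD : ∀ k : ℕ, ⌊(10 : ℝ) ^ (N + k + p) * y⌋ - ⌊(10 : ℝ) ^ (N + k) * y⌋
      = 10 ^ k * (⌊(10 : ℝ) ^ (N + p) * y⌋ - ⌊(10 : ℝ) ^ N * y⌋) := by
    intro k
    induction k with
    | zero => simp
    | succ k ih =>
      have h1 := hN (N + k) (by omega)
      unfold decDigit at h1
      rw [show N + (k + 1) + p = N + k + p + 1 by ring, show N + (k + 1) = N + k + 1 by ring,
        pow_succ (10 : ℤ)]
      linarith
  set D := ⌊(10 : ℝ) ^ (N + p) * y⌋ - ⌊(10 : ℝ) ^ N * y⌋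
  set a : ℝ := (10 : ℝ) ^ N * (10 ^ p - 1) * y - D with ha
  have hbound : ∀ k : ℕ, (10 : ℝ) ^ k * |a| < 1 := by
    intro k
    have hk : ((⌊(10 : ℝ) ^ (N + k + p) * y⌋ : ℝ) - ⌊(10 : ℝ) ^ (N + k) * y⌋)
        = 10 ^ k * (D : ℝ) := by exact_mod_cast hD k
    have e : (10 : ℝ) ^ k * a
        = (10 : ℝ) ^ (N + k + p) * y - (10 : ℝ) ^ (N + k) * y - 10 ^ k * (D : ℝ) := by
      rw [ha]; ring
    have e2 : (10 : ℝ) ^ k * |a| = |(10 : ℝ) ^ k * a| := by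
      rw [abs_mul, abs_of_pos (by positivity : (0 : ℝ) < 10 ^ k)]
    rw [e2, e, ← hk, abs_lt]
    have := Int.floor_le ((10 : ℝ) ^ (N + k + p) * y)
    have := Int.lt_floor_add_one ((10 : ℝ) ^ (N + k + p) * y)
    have := Int.floor_le ((10 : ℝ) ^ (N + k) * y)
    have := Int.lt_floor_add_one ((10 : ℝ) ^ (N + k) * y)
    constructor <;> linarith
  have ha0 : a = 0 := by
    by_contra hne
    have hpos : 0 < |a| := abs_pos.mpr hne
    obtain ⟨k, hk⟩ := pow_unbounded_of_one_lt (1 / |a|) (by norm_num : (1 : ℝ) < 10)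
    rw [div_lt_iff₀ hpos] at hk
    linarith [hbound k]
  have h10p : (1 : ℝ) < 10 ^ p := one_lt_pow₀ (by norm_num) (by omega)
  have hA : (10 : ℝ) ^ N * (10 ^ p - 1) ≠ 0 := by
    have : (10 : ℝ) ^ p - 1 ≠ 0 := by linarith
    positivity
  refine ⟨(D : ℚ) / (10 ^ N * (10 ^ p - 1)), ?_⟩
  push_cast
  rw [div_eq_iff hA]
  linarith

/-- If `c = m * 10^t` is a positive terminating decimal whose last nonzero digit is
`2, 3, 7` or `8`, then `x² = c` has no solution with ultimately periodic decimal
expansion. -/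
theorem sq_ne_of_last_digit_nonresidue (m : ℕ) (hm : 0 < m) (h10 : ¬ (10 ∣ m))
    (hd : m % 10 = 2 ∨ m % 10 = 3 ∨ m % 10 = 7 ∨ m % 10 = 8) (t : ℤ)
    (x : ℝ) (hx : UltimatelyPeriodic |x|) :
    x ^ 2 ≠ (m : ℝ) * (10 : ℝ) ^ t := by
  intro h
  obtain ⟨q, hq⟩ := hx.exists_rat
  rw [← sq_abs, ← hq] at h
  have h' : q ^ 2 = (m : ℚ) * (10 : ℚ) ^ t := by
    apply Rat.cast_injective (α := ℝ)
    push_cast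
    exact h
  have h0 : (10 : ℚ) ≠ 0 := by norm_num
  rcases Int.even_or_odd' t with ⟨s, rfl | rfl⟩
  · have hz : (10 : ℚ) ^ s ≠ 0 := zpow_ne_zero _ h0
    have hs : IsSquare (m : ℚ) := by
      refine ⟨q / 10 ^ s, ?_⟩
      rw [two_mul, zpow_add₀ h0] at h'
      field_simp
      linear_combination -h'
    rw [Rat.isSquare_natCast_iff] at hs
    obtain ⟨k, rfl⟩ := hs
    have : k % 10 < 10 := Nat.mod_lt _ (by norm_num)
    rw [Nat.mul_mod] at hd
    interval_cases k % 10 <;> simp at hd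
  · have hz : (10 : ℚ) ^ s ≠ 0 := zpow_ne_zero _ h0
    have hs : IsSquare ((10 * m : ℕ) : ℚ) := by
      refine ⟨q / 10 ^ s, ?_⟩
      rw [two_mul, zpow_add₀ h0, zpow_add₀ h0, zpow_one] at h'
      push_cast
      field_simp
      linear_combination -h'
    rw [Rat.isSquare_natCast_iff] at hs
    obtain ⟨k, hk⟩ := hs
    have hk10 : 10 ∣ k := by
      have hmod : (k * k) % 10 = 0 := by omega
      have : k % 10 < 10 := Nat.mod_lt _ (by norm_num)
      rw [Nat.mul_mod] at hmod
      apply Nat.dvd_of_mod_eq_zero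
      interval_cases k % 10 <;> simp_all
    obtain ⟨j, rfl⟩ := hk10
    exact h10 ⟨j * j, by linarith⟩
end

section
/- Let (m, a) and (m', a') be any two nonnegative decimals with truncation sequences t and t'. Then the sequence of differences n ↦ t n − t' n formally converges: for every k : ℕ the integer sequence n ↦ ⌊10^k·|t n − t' n|⌋ is eventually constant, and moreover either t n − t' n → 0 or the sign of t n − t' n is eventually constant. (This is the existence of the formal limit defining the sum/difference of two infinite decimals, in the hard case of opposite signs.) -/
/-- A nonzero integer `x` dominates the next digit: `10 * x + e` has the sign of `x` when
`|e| ≤ 9`. Thus the sign can change only once, from `0` to `±1`. -/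
theorem eventually_sign_const (D : ℕ → ℤ) (hD : ∀ n, |D (n + 1) - 10 * D n| ≤ 9) :
    ∃ s : SignType, ∃ N : ℕ, ∀ n ≥ N, SignType.sign (D n) = s := by
  by_cases h : ∀ n, D n = 0
  · exact ⟨0, 0, fun n _ => by simp [h n]⟩
  · push Not at h
    obtain ⟨N, hN⟩ := h
    rcases lt_or_gt_of_ne hN with h0 | h0
    · refine ⟨-1, N, fun n hn => sign_eq_neg_one_iff.2 ?_⟩
      induction n, hn using Nat.le_induction with
      | base => exact h0
      | succ n _ ih => have := abs_le.1 (hD n); lia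
    · refine ⟨1, N, fun n hn => sign_eq_one_iff.2 ?_⟩
      induction n, hn using Nat.le_induction with
      | base => exact h0
      | succ n _ ih => have := abs_le.1 (hD n); lia

theorem eventually_floor_const (D : ℕ → ℤ) (hD : ∀ n, |D (n + 1) - 10 * D n| ≤ 9) (k : ℕ) :
    ∃ c : ℤ, ∃ N : ℕ, ∀ p ≥ N, ⌊(D (k + p) : ℚ) / 10 ^ p⌋ = c := by
  set E : ℕ → ℤ := fun p => D (k + p) - D k * 10 ^ p with hE
  have hrec : ∀ p, |E (p + 1) - 10 * E p| ≤ 9 := by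
    intro p
    have h : E (p + 1) - 10 * E p = D (k + p + 1) - 10 * D (k + p) := by
      simp only [hE, ← add_assoc]; ring
    rw [h]; exact hD _
  have hbd : ∀ p, |E p| < 10 ^ p := by
    intro p
    induction p with
    | zero => simp [hE]
    | succ p ih =>
      have h1 := abs_le.1 (hrec p)
      rw [abs_lt] at ih ⊢
      rw [pow_succ]
      constructor <;> lia
  have hDE : ∀ p, (D (k + p) : ℚ) = D k * 10 ^ p + E p := by
    intro p; simp only [hE]; push_cast; ring
  obtain ⟨s, N, hs⟩ := eventually_sign_const E hrec
  by_cases hneg : s = -1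
  · refine ⟨D k - 1, N, fun p hp => ?_⟩
    have h0 : (E p : ℚ) < 0 := by
      exact_mod_cast sign_eq_neg_one_iff.1 ((hs p hp).trans hneg)
    have h1 : -(10 : ℚ) ^ p < E p := by exact_mod_cast (abs_lt.1 (hbd p)).1
    rw [Int.floor_eq_iff, le_div_iff₀ (by positivity), div_lt_iff₀ (by positivity), hDE]
    push_cast
    constructor <;> linarith
  · refine ⟨D k, N, fun p hp => ?_⟩
    have h0 : (0 : ℚ) ≤ E p := by
      have : ¬ E p < 0 := fun h => hneg ((hs p hp).symm.trans (sign_eq_neg_one_iff.2 h))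
      exact_mod_cast not_lt.1 this
    have h1 : (E p : ℚ) < 10 ^ p := by exact_mod_cast (abs_lt.1 (hbd p)).2
    rw [Int.floor_eq_iff, le_div_iff₀ (by positivity), div_lt_iff₀ (by positivity), hDE]
    constructor <;> linarith

theorem exists_scaled_difference (m m' : ℕ) (a a' : ℕ → Fin 10) :
    ∃ D : ℕ → ℤ, (∀ n, |D (n + 1) - 10 * D n| ≤ 9) ∧
      ∀ n, trunc m a n - trunc m' a' n = (D n : ℚ) / 10 ^ n := by
  refine ⟨fun n => Nat.rec ((m : ℤ) - m')
    (fun i x => 10 * x + (((a i : ℕ) : ℤ) - ((a' i : ℕ) : ℤ))) n, fun n => ?_, fun n => ?_⟩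
  · have h1 := (a n).isLt
    have h2 := (a' n).isLt
    rw [abs_le]
    constructor <;> simp only [add_sub_cancel_left] <;> lia
  · induction n with
    | zero => simp [trunc]
    | succ n ih =>
      have hstep : trunc m a (n + 1) - trunc m' a' (n + 1) = (trunc m a n - trunc m' a' n)
          + (((a n : ℕ) : ℚ) - ((a' n : ℕ) : ℚ)) / 10 ^ (n + 1) := by
        simp only [trunc, Finset.sum_range_succ]; ring
      rw [hstep, ih]
      push_cast
      rw [pow_succ]
      field_simp

/-- The differences of the truncation sequences of any two nonnegative decimals
formally converge: the formal limit defining the difference of two infinite decimals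
exists. -/
theorem formallyConverges_trunc_sub (m m' : ℕ) (a a' : ℕ → Fin 10) :
    FormallyConverges (fun n => trunc m a n - trunc m' a' n) := by
  obtain ⟨D, hD, hd⟩ := exists_scaled_difference m m' a a'
  simp only [FormallyConverges, hd]
  constructor
  · intro k
    have habs : ∀ n, |(|D (n + 1)| - 10 * |D n|)| ≤ 9 := by
      intro n
      have h := abs_abs_sub_abs_le_abs_sub (D (n + 1)) (10 * D n)
      rw [abs_mul, abs_of_pos (by norm_num : (0 : ℤ) < 10)] at h
      exact h.trans (hD n)
    obtain ⟨c, N, hc⟩ := eventually_floor_const (fun n => |D n|) habs k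
    refine ⟨c, k + N, fun n hn => ?_⟩
    obtain ⟨p, rfl⟩ := Nat.exists_eq_add_of_le (show k ≤ n by lia)
    rw [← hc p (by lia)]
    congr 1
    rw [abs_div, abs_of_pos (by positivity : (0 : ℚ) < 10 ^ (k + p)), pow_add]
    push_cast
    field_simp
  -- The sign is eventually constant even when the differences tend to `0`.
  · right
    obtain ⟨s, N, hs⟩ := eventually_sign_const D hD
    refine ⟨s, N, fun n hn => ?_⟩
    rw [← hs n hn]
    have hp : (0 : ℚ) < 10 ^ n := by positivity
    rcases lt_trichotomy (D n) 0 with h | h | h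
    · rw [sign_neg h, sign_neg (div_neg_of_neg_of_pos (by exact_mod_cast h) hp)]
    · simp [h]
    · rw [sign_pos h, sign_pos (div_pos (by exact_mod_cast h) hp)]
end

section
/- Let (m, a) and (m', a') be any two nonnegative decimals with truncation sequences t and s. Then for every k : ℕ the integer sequence n ↦ ⌊10^k·(t n · s n)⌋ is eventually constant. (This is the existence of the formal limit defining the product of two infinite decimals.) -/
theorem trunc_nonneg (m : ℕ) (a : ℕ → Fin 10) (n : ℕ) : 0 ≤ trunc m a n := by
  unfold trunc
  positivity

theorem trunc_mono (m : ℕ) (a : ℕ → Fin 10) : Monotone (trunc m a) := by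
  refine monotone_nat_of_le_succ fun n => ?_
  unfold trunc
  rw [Finset.sum_range_succ, ← add_assoc]
  exact le_add_of_nonneg_right (by positivity)

theorem trunc_add_le (m : ℕ) (a : ℕ → Fin 10) (n : ℕ) :
    trunc m a n + 1 / 10 ^ n ≤ m + 1 := by
  induction n with
  | zero => simp [trunc]
  | succ n ih =>
    have hdigit : ((a n : ℕ) : ℚ) ≤ 9 := by exact_mod_cast Nat.le_of_lt_succ (a n).isLt
    have hstep : ((a n : ℕ) : ℚ) / 10 ^ (n + 1) + 1 / 10 ^ (n + 1) ≤ 1 / 10 ^ n := by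
      rw [← add_div, pow_succ, div_le_div_iff₀ (by positivity) (by positivity)]
      nlinarith [pow_pos (by norm_num : (0 : ℚ) < 10) n]
    unfold trunc at ih ⊢
    rw [Finset.sum_range_succ]
    linarith

theorem trunc_le (m : ℕ) (a : ℕ → Fin 10) (n : ℕ) : trunc m a n ≤ m + 1 := by
  have hgap : (0 : ℚ) ≤ 1 / 10 ^ n := by positivity
  linarith [trunc_add_le m a n]

theorem eventually_const_of_monotone_of_le {f : ℕ → ℤ} (hf : Monotone f) (B : ℤ)
    (hB : ∀ n, f n ≤ B) : ∃ c : ℤ, ∃ N : ℕ, ∀ n ≥ N, f n = c := by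
  obtain ⟨c, ⟨N, hN⟩, hmax⟩ := Int.exists_greatest_of_bdd (P := fun z => ∃ n, f n = z)
    ⟨B, by rintro z ⟨n, rfl⟩; exact hB n⟩ ⟨f 0, 0, rfl⟩
  exact ⟨c, N, fun n hn => le_antisymm (hmax _ ⟨n, rfl⟩) (hN ▸ hf hn)⟩

/-- The formal limit defining the product of two infinite decimals exists: for any two
nonnegative decimals with truncation sequences `t` and `s` and any `k`, the integer
sequence `n ↦ ⌊10^k * (t n * s n)⌋` is eventually constant. -/
theorem formal_limit_of_product (m m' : ℕ) (a a' : ℕ → Fin 10) :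
    ∀ k : ℕ, ∃ c : ℤ, ∃ N : ℕ, ∀ n ≥ N,
      ⌊(10 : ℚ) ^ k * (trunc m a n * trunc m' a' n)⌋ = c := by
  intro k
  refine eventually_const_of_monotone_of_le (fun i j hij => ?_)
    ⌊(10 : ℚ) ^ k * ((m + 1) * (m' + 1))⌋ fun n => ?_
  · exact Int.floor_le_floor (mul_le_mul_of_nonneg_left
      (mul_le_mul (trunc_mono m a hij) (trunc_mono m' a' hij) (trunc_nonneg _ _ _)
        (trunc_nonneg _ _ _)) (by positivity))
  · exact Int.floor_le_floor (mul_le_mul_of_nonneg_left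
      (mul_le_mul (trunc_le m a n) (trunc_le m' a' n) (trunc_nonneg _ _ _)
        (by positivity)) (by positivity))
end

section
/- Let d : ℕ → ℚ be a sequence of terminating decimals such that for every k : ℕ there exist N : ℕ and a rational c with 10^k·c ∈ ℤ satisfying c < d n and d n < c + 10^(−k) for all n > N. Then d formally converges: for every k : ℕ the integer sequence n ↦ ⌊10^k·|d n|⌋ is eventually constant, and moreover either d n → 0 or the sign of d n is eventually constant. -/
/-- The squeeze hypothesis at one level, scaled so that the bounds are consecutive integers. -/
lemma scaled_bounds {k : ℕ} {c x : ℚ} {z : ℤ} (hz : (10 : ℚ) ^ k * c = z)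
    (h : c < x ∧ x < c + ((10 : ℚ) ^ k)⁻¹) :
    (z : ℚ) < 10 ^ k * x ∧ 10 ^ k * x < z + 1 := by
  have hp : (0 : ℚ) < 10 ^ k := by positivity
  have h1 := mul_lt_mul_of_pos_left h.1 hp
  have h2 := mul_lt_mul_of_pos_left h.2 hp
  rw [mul_add, mul_inv_cancel₀ hp.ne', hz] at h2
  rw [hz] at h1
  exact ⟨h1, h2⟩

/-- A finer criterion for formal convergence: if for every `k` the sequence is
eventually strictly squeezed between `c` and `c + 10^(-k)` for some rational `c` with
`10^k * c ∈ ℤ`, then the sequence formally converges. -/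
theorem formallyConverges_of_squeeze (d : ℕ → ℚ) (hterm : ∀ n, TerminatingDec (d n))
    (hsq : ∀ k : ℕ, ∃ N : ℕ, ∃ c : ℚ, (∃ z : ℤ, (10 : ℚ) ^ k * c = (z : ℚ)) ∧
      ∀ n > N, c < d n ∧ d n < c + ((10 : ℚ) ^ k)⁻¹) :
    FormallyConverges d := by
  refine ⟨fun k => ?_, Or.inr ?_⟩
  · obtain ⟨N, c, ⟨z, hz⟩, h⟩ := hsq k
    have hp : (0 : ℚ) < 10 ^ k := by positivity
    rcases le_or_gt 0 z with h0 | h0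
    · refine ⟨z, N + 1, fun n hn => ?_⟩
      obtain ⟨h1, h2⟩ := scaled_bounds hz (h n hn)
      have hz0 : (0 : ℚ) ≤ z := by exact_mod_cast h0
      have hd : 0 < d n := pos_of_mul_pos_right (hz0.trans_lt h1) hp.le
      rw [abs_of_pos hd, Int.floor_eq_iff]
      exact ⟨h1.le, h2⟩
    · refine ⟨-z - 1, N + 1, fun n hn => ?_⟩
      obtain ⟨h1, h2⟩ := scaled_bounds hz (h n hn)
      have hz0 : (z : ℚ) + 1 ≤ 0 := by exact_mod_cast h0
      have hd : d n < 0 := by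
        by_contra! hd
        have := mul_nonneg hp.le hd
        linarith
      rw [abs_of_neg hd, Int.floor_eq_iff]
      push_cast
      constructor <;> linarith
  · obtain ⟨N, c, ⟨z, hz⟩, h⟩ := hsq 0
    rcases le_or_gt 0 z with h0 | h0
    · refine ⟨1, N + 1, fun n hn => sign_pos ?_⟩
      obtain ⟨h1, h2⟩ := scaled_bounds hz (h n hn)
      have hz0 : (0 : ℚ) ≤ z := by exact_mod_cast h0
      linarith
    · refine ⟨-1, N + 1, fun n hn => sign_neg ?_⟩
      obtain ⟨h1, h2⟩ := scaled_bounds hz (h n hn)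
      have hz0 : (z : ℚ) + 1 ≤ 0 := by exact_mod_cast h0
      linarith
end

section
/- Let t n = ⌊10^n·√2⌋/10^n be the n-truncation of √2. Then for every k : ℕ there exists N such that ⌊10^k·(t n)²⌋ = 2·10^k − 1 for all n ≥ N. (In other words, the squares of the decimal truncations of √2 formally converge to 1.999…, not to 2.) -/
/-!
The truncation `t n` is rational and `√2` is not, so `√2 - 10⁻ⁿ < t n < √2` with a strict upper
bound. Squaring gives `2 - 3 * 10⁻ⁿ < (t n)² < 2`, and once `n ≥ k + 1` the lower bound is at
least `2 - 10⁻ᵏ`, which pins the floor of `10ᵏ * (t n)²` to `2 * 10ᵏ - 1`.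
-/

/-- The `n`-truncation of `√2`: the rational `⌊10^n * √2⌋ / 10^n`. -/
noncomputable def sqrtTwoTrunc (n : ℕ) : ℚ := (⌊(10 : ℝ) ^ n * Real.sqrt 2⌋ : ℚ) / 10 ^ n

theorem sqrtTwoTrunc_lt_sqrt_two (n : ℕ) : (sqrtTwoTrunc n : ℝ) < √2 := by
  have hp : (0 : ℝ) < 10 ^ n := by positivity
  have hle : (sqrtTwoTrunc n : ℝ) ≤ √2 := by
    unfold sqrtTwoTrunc
    push_cast
    rw [div_le_iff₀ hp, mul_comm]
    exact Int.floor_le _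
  exact lt_of_le_of_ne hle (irrational_sqrt_two.ne_rat _).symm

theorem sqrt_two_lt_sqrtTwoTrunc_add (n : ℕ) :
    √2 < (sqrtTwoTrunc n : ℝ) + 1 / 10 ^ n := by
  have hp : (0 : ℝ) < 10 ^ n := by positivity
  unfold sqrtTwoTrunc
  push_cast
  rw [← add_div, lt_div_iff₀ hp, mul_comm]
  exact Int.lt_floor_add_one _

/-- The squares of the decimal truncations of `√2` formally converge to `1.999…`,
not to `2`. -/
theorem sq_trunc_sqrt_two_formal_limit :
    ∀ k : ℕ, ∃ N : ℕ, ∀ n ≥ N,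
      ⌊(10 : ℚ) ^ k * (sqrtTwoTrunc n) ^ 2⌋ = 2 * 10 ^ k - 1 := by
  intro k
  refine ⟨k + 1, fun n hn => ?_⟩
  have hlt := sqrtTwoTrunc_lt_sqrt_two n
  have hgt := sqrt_two_lt_sqrtTwoTrunc_add n
  have hs : √2 ^ 2 = (2 : ℝ) := Real.sq_sqrt (by norm_num)
  have hs1 : 1 < √2 := by nlinarith [Real.sqrt_nonneg 2]
  have hs2 : √2 < 3 / 2 := by nlinarith [Real.sqrt_nonneg 2]
  have hq : (1 : ℝ) ≤ 10 ^ k := one_le_pow₀ (by norm_num)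
  have hpq : (10 : ℝ) ^ k * 10 ≤ 10 ^ n := by
    rw [← pow_succ]
    exact pow_le_pow_right₀ (by norm_num) hn
  -- `e = 10⁻ⁿ` satisfies `10ᵏ * e ≤ 1 / 10`, which absorbs the factor `3` in `2 - 3 * e`.
  obtain ⟨e, he⟩ : ∃ e : ℝ, e = 1 / 10 ^ n := ⟨_, rfl⟩
  have he0 : 0 < e := by rw [he]; positivity
  have hqe : (10 : ℝ) ^ k * e ≤ 1 / 10 := by
    rw [he, mul_one_div, div_le_iff₀ (by positivity)]
    linarith
  have he1 : e ≤ 1 / 10 := by nlinarith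
  rw [← he] at hgt
  have hup : (sqrtTwoTrunc n : ℝ) ^ 2 < 2 := by nlinarith
  have hlow : 2 - 3 * e ≤ (sqrtTwoTrunc n : ℝ) ^ 2 := by nlinarith
  rw [Int.floor_eq_iff]
  constructor
  · have h : (2 * 10 ^ k - 1 : ℝ) ≤ 10 ^ k * (sqrtTwoTrunc n : ℝ) ^ 2 := by nlinarith
    exact_mod_cast h
  · have h : (10 ^ k * (sqrtTwoTrunc n : ℝ) ^ 2 : ℝ) < 2 * 10 ^ k - 1 + 1 := by nlinarith
    exact_mod_cast h
end

section
/- Let t n = ⌊10^n·(11/9)⌋/10^n and s n = ⌊10^n·(9/11)⌋/10^n be the n-truncations of 1.222… = 11/9 and 0.818181… = 9/11. Then for every k : ℕ there exists N such that ⌊10^k·(t n · s n)⌋ = 10^k − 1 for all n ≥ N. (In other words, the products of the truncations formally converge to 0.999…: the formal-limit product 1.222…×0.818181… equals 0.999….) -/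
/-!
Write `P = 10 ^ n`, and let `a`, `b` be the integer parts of `11 P / 9` and `9 P / 11`, so that
the product of truncations is `a b / P ^ 2`. Since `P ≡ 1 (mod 9)`, the number `11 P / 9` is not
an integer; hence `9 a < 11 P`, and the product is strictly below `(11 / 9) (9 / 11) = 1`. On the
other hand each floor loses less than one, so the product is at least `1 - (11/9 + 9/11) / P`,
which exceeds `1 - 10 ^ (-k)` as soon as `n ≥ k + 1`.
-/

/-- The `n`-truncation of `1.222… = 11/9`. -/
def truncElevenNinths (n : ℕ) : ℚ := (⌊(10 : ℚ) ^ n * (11 / 9)⌋ : ℚ) / 10 ^ n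

/-- The `n`-truncation of `0.818181… = 9/11`. -/
def truncNineElevenths (n : ℕ) : ℚ := (⌊(10 : ℚ) ^ n * (9 / 11)⌋ : ℚ) / 10 ^ n

/-- The products of the truncations of `1.222…` and `0.818181…` formally converge to
`0.999…`: the formal-limit product `1.222… × 0.818181…` equals `0.999…`. -/
theorem product_formal_limit_nines :
    ∀ k : ℕ, ∃ N : ℕ, ∀ n ≥ N,
      ⌊(10 : ℚ) ^ k * (truncElevenNinths n * truncNineElevenths n)⌋ = 10 ^ k - 1 := by
  intro k
  refine ⟨k + 1, fun n hn => ?_⟩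
  unfold truncElevenNinths truncNineElevenths
  have ha := Int.floor_le ((10 : ℚ) ^ n * (11 / 9))
  have ha' := Int.lt_floor_add_one ((10 : ℚ) ^ n * (11 / 9))
  have hb := Int.floor_le ((10 : ℚ) ^ n * (9 / 11))
  have hb' := Int.lt_floor_add_one ((10 : ℚ) ^ n * (9 / 11))
  generalize ⌊(10 : ℚ) ^ n * (11 / 9)⌋ = a at *
  generalize ⌊(10 : ℚ) ^ n * (9 / 11)⌋ = b at *
  have hmod : (10 : ℤ) ^ n % 9 = 1 := by
    simpa [Int.ModEq] using (show (10 : ℤ) ≡ 1 [ZMOD 9] by decide).pow n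
  have hlt : 9 * a < 11 * (10 : ℤ) ^ n := by
    have h : 9 * a ≤ 11 * (10 : ℤ) ^ n := by
      have : 9 * (a : ℚ) ≤ 11 * (10 : ℚ) ^ n := by linarith
      exact_mod_cast this
    omega
  have hlt' : 9 * (a : ℚ) < 11 * (10 : ℚ) ^ n := by exact_mod_cast hlt
  have hK : (0 : ℚ) < 10 ^ k := by positivity
  have hP : (10 : ℚ) * 10 ^ k ≤ 10 ^ n := by
    rw [← pow_succ']
    exact pow_le_pow_right₀ (by norm_num) hn
  have hK1 : (1 : ℚ) ≤ 10 ^ k := one_le_pow₀ (by norm_num)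
  rw [Int.floor_eq_iff]
  push_cast
  generalize (10 : ℚ) ^ n = P at *
  generalize (10 : ℚ) ^ k = K at *
  have hP0 : 0 < P := by linarith
  have hb0 : 0 < (b : ℚ) := by linarith
  have hupper : (a : ℚ) * b < P ^ 2 := by nlinarith
  have hlower : P ^ 2 - (11 / 9 + 9 / 11) * P ≤ (a : ℚ) * b := by
    have : (P * (11 / 9) - 1) * (P * (9 / 11) - 1) ≤ (a : ℚ) * b :=
      mul_le_mul (by linarith) (by linarith) (by linarith) (by linarith)
    nlinarith
  have heq : K * ((a : ℚ) / P * (b / P)) = K * (a * b) / P ^ 2 := by field_simp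
  rw [heq]
  constructor
  · rw [le_div_iff₀ (by positivity)]
    nlinarith [mul_le_mul_of_nonneg_left hlower hK.le, mul_le_mul_of_nonneg_right hP hP0.le,
      mul_pos hK hP0]
  · rw [div_lt_iff₀ (by positivity)]
    nlinarith [mul_lt_mul_of_pos_left hupper hK]
end
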